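/- arXiv:2001.09317 — 2 statements merged into one kernel-verified Lean document; each statement's English description precedes it below -/
import Mathlib

section
/- (Final chain in the proof of Lemma 4 of the paper.) With μ_I and μ_II the Case I and Case II schedules built from integers k ≥ 0, k1 ≥ 0, k2 ≥ 1 and a common schedule ν, and T = k + k1 + k2 + 1: ∑_{m=0}^{k1+k2} (A_{μ_I}(T−m) − A_{μ_II}(T−m)) = ((μ* − μ_min)(1 − (1−μ_min)^{k2})/μ_min) · ((1 − (1−μ*)^{k1+1})/μ* − A_ν(k)), where A_ν(k) = ∑_{τ=0}^∞ ∏_{i=0}^{τ-1} (1 − ν(k−i)); moreover this quantity is ≤ 0, since A_ν(k) ≥ 1/μ*. -/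
/-- The expected Age-of-Information at time-slot `t` under a per-slot
success-probability function `μ : ℤ → ℝ`: the series
`A_μ(t) = ∑_{τ=0}^∞ ∏_{i=0}^{τ-1} (1 − μ(t−i))`, where the `τ = 0` term
(the empty product) equals 1. -/
noncomputable def aoi (μ : ℤ → ℝ) (t : ℤ) : ℝ :=
  ∑' τ : ℕ, ∏ i ∈ Finset.range τ, (1 - μ (t - (i : ℤ)))

/-- Case I schedule: `ν(s)` for `s ≤ k`; `μ*` in slot `k+1`; the worst channel
`μ_min` in slots `k+2` to `k+k2+1`; the optimal channel `μ*` thereafter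
(in particular in slots `k+k2+2` to `T = k+k1+k2+1`). -/
noncomputable def caseI (μmin μstar : ℝ) (ν : ℤ → ℝ) (k k2 : ℕ) : ℤ → ℝ :=
  fun s =>
    if s ≤ (k : ℤ) then ν s
    else if s = (k : ℤ) + 1 then μstar
    else if s ≤ (k : ℤ) + (k2 : ℤ) + 1 then μmin
    else μstar

/-- Case II schedule: `ν(s)` for `s ≤ k`; the worst channel `μ_min` in slots
`k+1` to `k+k2`; the optimal channel `μ*` thereafter
(in particular in slots `k+k2+1` to `T = k+k1+k2+1`). -/
noncomputable def caseII (μmin μstar : ℝ) (ν : ℤ → ℝ) (k k2 : ℕ) : ℤ → ℝ :=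
  fun s =>
    if s ≤ (k : ℤ) then ν s
    else if s ≤ (k : ℤ) + (k2 : ℤ) then μmin
    else μstar

/-!
One time-slot acts on the age by the affine map `φ_x a = 1 + (1 - x) a`, where `x` is the channel
used. Write `p = μmin`, `q = μstar`, `A = aoi ν k` and `S = ∑_{i < k2} (1 - p) ^ i`.

In the slots `k + 1, …, k + k2` both cases apply only `φ_p` after the first slot, so their gap is
`φ_q A - φ_p A = (p - q) A` contracted by powers of `1 - p`, which adds up to `(p - q) A S`.
At the slot `k + k2 + 1` the gap is the commutator `φ_p^k2 (φ_q A) - φ_q (φ_p^k2 A) = (q - p) S`,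
in which `A` cancels; from then on both cases apply `φ_q`, which contracts the gap by powers of
`1 - q`. The total gap is therefore `(q - p) S (∑_{i ≤ k1} (1 - q) ^ i - A)`. The last factor is
nonpositive since the geometric sum is dominated term by term by a partial sum of the series `A`.
-/

open Finset

/-- The series defining `aoi μ t` converges, so that the expected age at `t` is finite. It is
carried as a hypothesis because `aoi μ t` takes the junk value `0` when the series diverges. -/
def AoiSummable (μ : ℤ → ℝ) (t : ℤ) : Prop :=
  Summable fun τ : ℕ => ∏ i ∈ range τ, (1 - μ (t - (i : ℤ)))

section Aoi

variable {μ ν : ℤ → ℝ} {t : ℤ} {p : ℝ}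

theorem prod_one_sub_congr (h : ∀ s ≤ t, μ s = ν s) (τ : ℕ) :
    ∏ i ∈ range τ, (1 - μ (t - (i : ℤ))) = ∏ i ∈ range τ, (1 - ν (t - (i : ℤ))) :=
  prod_congr rfl fun i _ => by rw [h _ (by lia)]

theorem aoi_congr (h : ∀ s ≤ t, μ s = ν s) : aoi μ t = aoi ν t :=
  tsum_congr (prod_one_sub_congr h)

theorem AoiSummable.congr (hν : AoiSummable ν t) (h : ∀ s ≤ t, μ s = ν s) : AoiSummable μ t :=
  (summable_congr (prod_one_sub_congr h)).2 hν

theorem aoiSummable_of_forall_mem_Icc (hp : 0 < p) (h : ∀ s ≤ t, μ s ∈ Set.Icc p 1) :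
    AoiSummable μ t := by
  have hp1 : p ≤ 1 := (h t le_rfl).1.trans (h t le_rfl).2
  have hμ (i : ℕ) : μ (t - i) ∈ Set.Icc p 1 := h _ (by lia)
  refine Summable.of_nonneg_of_le (fun τ => prod_nonneg fun i _ => sub_nonneg.2 (hμ i).2)
    (fun τ => ?_) (summable_geometric_of_lt_one (sub_nonneg.2 hp1) (sub_lt_self 1 hp))
  calc ∏ i ∈ range τ, (1 - μ (t - (i : ℤ))) ≤ ∏ _i ∈ range τ, (1 - p) :=
        prod_le_prod (fun i _ => sub_nonneg.2 (hμ i).2) fun i _ => sub_le_sub_left (hμ i).1 1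
    _ = (1 - p) ^ τ := by rw [prod_const, card_range]

theorem geom_sum_one_sub_le_aoi (hs : AoiSummable μ t) (hp : p ≤ 1) (h : ∀ s ≤ t, μ s ≤ p)
    (n : ℕ) : ∑ i ∈ range n, (1 - p) ^ i ≤ aoi μ t := by
  have hμ (i : ℕ) : 1 - p ≤ 1 - μ (t - i) := sub_le_sub_left (h _ (by lia)) 1
  have hp0 : 0 ≤ 1 - p := sub_nonneg.2 hp
  calc ∑ τ ∈ range n, (1 - p) ^ τ ≤ ∑ τ ∈ range n, ∏ i ∈ range τ, (1 - μ (t - (i : ℤ))) := by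
        refine sum_le_sum fun τ _ => ?_
        rw [← card_range τ, ← prod_const, card_range]
        exact prod_le_prod (fun _ _ => hp0) fun i _ => hμ i
    _ ≤ aoi μ t := Summable.sum_le_tsum _ (fun τ _ => prod_nonneg fun i _ => hp0.trans (hμ i)) hs

theorem prod_one_sub_succ (μ : ℤ → ℝ) (t : ℤ) (τ : ℕ) :
    ∏ i ∈ range (τ + 1), (1 - μ (t + 1 - (i : ℤ))) =
      (1 - μ (t + 1)) * ∏ i ∈ range τ, (1 - μ (t - (i : ℤ))) := by
  rw [prod_range_succ', mul_comm]
  simp only [Nat.cast_add, Nat.cast_one, Nat.cast_zero, sub_zero, add_sub_add_right_eq_sub]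

theorem AoiSummable.succ (h : AoiSummable μ t) : AoiSummable μ (t + 1) := by
  refine (summable_nat_add_iff 1).1 ?_
  simp only [prod_one_sub_succ]
  exact h.mul_left _

theorem AoiSummable.aoi_succ (h : AoiSummable μ t) :
    aoi μ (t + 1) = 1 + (1 - μ (t + 1)) * aoi μ t := by
  unfold aoi
  rw [Summable.tsum_eq_zero_add h.succ, prod_range_zero, ← tsum_mul_left]
  simp only [prod_one_sub_succ]

theorem AoiSummable.add_nat (h : AoiSummable μ t) (n : ℕ) : AoiSummable μ (t + n) := by
  induction n with
  | zero => simpa using h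
  | succ n ih => simpa [add_assoc] using ih.succ

theorem AoiSummable.aoi_add_nat (h : AoiSummable μ t) {n : ℕ}
    (hp : ∀ s ∈ Set.Ioc t (t + n), μ s = p) :
    aoi μ (t + n) = (1 - p) ^ n * aoi μ t + ∑ i ∈ range n, (1 - p) ^ i := by
  induction n with
  | zero => simp
  | succ n ih =>
    have hstep : aoi μ (t + n + 1) = 1 + (1 - p) * aoi μ (t + n) := by
      rw [(h.add_nat n).aoi_succ, hp _ ⟨by lia, by lia⟩]
    rw [Nat.cast_succ, ← add_assoc, hstep, ih fun s hs => hp s ⟨hs.1, by have := hs.2; lia⟩,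
      geom_sum_succ]
    ring

theorem aoi_add_nat_sub_aoi_add_nat (hμ : AoiSummable μ t) (hν : AoiSummable ν t) {n : ℕ}
    (hμp : ∀ s ∈ Set.Ioc t (t + n), μ s = p) (hνp : ∀ s ∈ Set.Ioc t (t + n), ν s = p) :
    aoi μ (t + n) - aoi ν (t + n) = (1 - p) ^ n * (aoi μ t - aoi ν t) := by
  rw [hμ.aoi_add_nat hμp, hν.aoi_add_nat hνp]
  ring

end Aoi

theorem geom_sum_one_sub {K : Type*} [Field K] {p : K} (hp : p ≠ 0) (n : ℕ) :
    ∑ i ∈ range n, (1 - p) ^ i = (1 - (1 - p) ^ n) / p := by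
  rw [eq_div_iff hp, mul_comm]
  simpa using mul_neg_geom_sum (1 - p) n

theorem sum_range_add_sub_eq_sum_range_add_one {M : Type*} [AddCommMonoid M] (f : ℤ → M) (t : ℤ)
    (n : ℕ) : ∑ m ∈ range n, f (t + n - m) = ∑ j ∈ range n, f (t + 1 + j) := by
  rw [← sum_range_reflect]
  refine sum_congr rfl fun j hj => congrArg f ?_
  have := mem_range.1 hj
  lia

section Cases

variable {μmin μstar : ℝ} {ν : ℤ → ℝ} {k k2 : ℕ} {s : ℤ}

theorem caseI_of_le (hs : s ≤ k) : caseI μmin μstar ν k k2 s = ν s := if_pos hs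

theorem caseI_add_one : caseI μmin μstar ν k k2 (k + 1) = μstar := by
  simp [caseI]

theorem caseI_of_mem_Ioc (hs : s ∈ Set.Ioc (k + 1 : ℤ) (k + 1 + k2)) :
    caseI μmin μstar ν k k2 s = μmin := by
  obtain ⟨hlt, hle⟩ := hs
  rw [caseI, if_neg (by lia), if_neg (by lia), if_pos (by lia)]

theorem caseI_of_lt (hs : (k + 1 + k2 : ℤ) < s) : caseI μmin μstar ν k k2 s = μstar := by
  rw [caseI, if_neg (by lia), if_neg (by lia), if_neg (by lia)]

theorem caseII_of_le (hs : s ≤ k) : caseII μmin μstar ν k k2 s = ν s := if_pos hs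

theorem caseII_of_mem_Ioc (hs : s ∈ Set.Ioc (k : ℤ) (k + k2)) :
    caseII μmin μstar ν k k2 s = μmin := by
  rw [caseII, if_neg hs.1.not_ge, if_pos hs.2]

theorem caseII_of_lt (hs : (k + k2 : ℤ) < s) : caseII μmin μstar ν k k2 s = μstar := by
  rw [caseII, if_neg (by lia), if_neg (by lia)]

theorem aoi_caseI_add_one (h : AoiSummable ν k) :
    aoi (caseI μmin μstar ν k k2) (k + 1) = 1 + (1 - μstar) * aoi ν k := by
  rw [(h.congr fun _ => caseI_of_le).aoi_succ, caseI_add_one, aoi_congr fun _ => caseI_of_le]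

theorem aoi_caseII_add (h : AoiSummable ν k) {n : ℕ} (hn : n ≤ k2) :
    aoi (caseII μmin μstar ν k k2) (k + n) =
      (1 - μmin) ^ n * aoi ν k + ∑ i ∈ range n, (1 - μmin) ^ i := by
  rw [(h.congr fun _ => caseII_of_le).aoi_add_nat fun s hs =>
      caseII_of_mem_Ioc ⟨hs.1, hs.2.trans (by lia)⟩,
    aoi_congr fun _ => caseII_of_le]

theorem aoi_caseI_sub_aoi_caseII_of_lt (h : AoiSummable ν k) {j : ℕ} (hj : j < k2) :
    aoi (caseI μmin μstar ν k k2) (k + 1 + j) - aoi (caseII μmin μstar ν k k2) (k + 1 + j) =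
      (1 - μmin) ^ j * ((μmin - μstar) * aoi ν k) := by
  have hII : aoi (caseII μmin μstar ν k k2) (k + 1) = 1 + (1 - μmin) * aoi ν k := by
    simpa [add_comm] using
      aoi_caseII_add (μmin := μmin) (μstar := μstar) h (show 1 ≤ k2 from by lia)
  rw [aoi_add_nat_sub_aoi_add_nat (h.congr fun _ => caseI_of_le).succ
      (h.congr fun _ => caseII_of_le).succ
      (fun s hs => caseI_of_mem_Ioc ⟨hs.1, hs.2.trans (by lia)⟩)
      (fun s hs => caseII_of_mem_Ioc ⟨by have := hs.1; lia, hs.2.trans (by lia)⟩),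
    aoi_caseI_add_one h, hII]
  ring

theorem aoi_caseI_sub_aoi_caseII_add (h : AoiSummable ν k) :
    aoi (caseI μmin μstar ν k k2) (k + 1 + k2) - aoi (caseII μmin μstar ν k k2) (k + 1 + k2) =
      (μstar - μmin) * ∑ i ∈ range k2, (1 - μmin) ^ i := by
  have hI : aoi (caseI μmin μstar ν k k2) (k + 1 + k2) =
      (1 - μmin) ^ k2 * (1 + (1 - μstar) * aoi ν k) + ∑ i ∈ range k2, (1 - μmin) ^ i := by
    rw [(h.congr fun _ => caseI_of_le).succ.aoi_add_nat fun _ => caseI_of_mem_Ioc,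
      aoi_caseI_add_one h]
  have hII : aoi (caseII μmin μstar ν k k2) (k + 1 + k2) =
      1 + (1 - μstar) * ((1 - μmin) ^ k2 * aoi ν k + ∑ i ∈ range k2, (1 - μmin) ^ i) := by
    rw [add_right_comm, ((h.congr fun _ => caseII_of_le).add_nat k2).aoi_succ,
      caseII_of_lt (by lia), aoi_caseII_add h le_rfl]
  rw [hI, hII]
  linear_combination mul_neg_geom_sum (1 - μmin) k2

theorem aoi_caseI_sub_aoi_caseII_add_add (h : AoiSummable ν k) (i : ℕ) :
    aoi (caseI μmin μstar ν k k2) (k + 1 + k2 + i) -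
        aoi (caseII μmin μstar ν k k2) (k + 1 + k2 + i) =
      (1 - μstar) ^ i * ((μstar - μmin) * ∑ i ∈ range k2, (1 - μmin) ^ i) := by
  rw [aoi_add_nat_sub_aoi_add_nat ((h.congr fun _ => caseI_of_le).succ.add_nat k2)
      ((h.congr fun _ => caseII_of_le).succ.add_nat k2)
      (fun s hs => caseI_of_lt hs.1) (fun s hs => caseII_of_lt (by have := hs.1; lia)),
    aoi_caseI_sub_aoi_caseII_add h]

theorem sum_aoi_caseI_sub_aoi_caseII (h : AoiSummable ν k) (k1 : ℕ) :
    ∑ m ∈ range (k1 + k2 + 1),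
        (aoi (caseI μmin μstar ν k k2) ((k : ℤ) + k1 + k2 + 1 - m) -
          aoi (caseII μmin μstar ν k k2) ((k : ℤ) + k1 + k2 + 1 - m)) =
      (μstar - μmin) * (∑ i ∈ range k2, (1 - μmin) ^ i) *
        (∑ i ∈ range (k1 + 1), (1 - μstar) ^ i - aoi ν k) := by
  let gap (t : ℤ) : ℝ := aoi (caseI μmin μstar ν k k2) t - aoi (caseII μmin μstar ν k k2) t
  have hworst : ∑ j ∈ range k2, gap (k + 1 + j) =
      (∑ i ∈ range k2, (1 - μmin) ^ i) * ((μmin - μstar) * aoi ν k) := by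
    rw [sum_mul]
    exact sum_congr rfl fun j hj => aoi_caseI_sub_aoi_caseII_of_lt h (mem_range.1 hj)
  have hoptimal : ∑ i ∈ range (k1 + 1), gap (k + 1 + k2 + i) =
      (∑ i ∈ range (k1 + 1), (1 - μstar) ^ i) *
        ((μstar - μmin) * ∑ i ∈ range k2, (1 - μmin) ^ i) := by
    rw [sum_mul]
    exact sum_congr rfl fun i _ => aoi_caseI_sub_aoi_caseII_add_add h i
  calc ∑ m ∈ range (k1 + k2 + 1), gap ((k : ℤ) + k1 + k2 + 1 - m)
      = ∑ j ∈ range (k2 + (k1 + 1)), gap (k + 1 + j) := by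
        rw [← sum_range_add_sub_eq_sum_range_add_one, show k1 + k2 + 1 = k2 + (k1 + 1) by ring]
        push_cast
        ring_nf
    _ = ∑ j ∈ range k2, gap (k + 1 + j) + ∑ i ∈ range (k1 + 1), gap (k + 1 + k2 + i) := by
        simp only [sum_range_add, Nat.cast_add, add_assoc]
    _ = (μstar - μmin) * (∑ i ∈ range k2, (1 - μmin) ^ i) *
          (∑ i ∈ range (k1 + 1), (1 - μstar) ^ i - aoi ν k) := by
        rw [hworst, hoptimal]
        ring

end Cases

theorem stmt_7_general (μmin μstar : ℝ) (hμ_le : μmin ≤ μstar) (hμstar_le : μstar ≤ 1)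
    (k k1 k2 : ℕ) (ν : ℤ → ℝ) (hν : ∀ s ≤ (k : ℤ), ν s ≤ μstar) (hsum : AoiSummable ν k) :
    (∑ m ∈ range (k1 + k2 + 1),
        (aoi (caseI μmin μstar ν k k2) ((k : ℤ) + k1 + k2 + 1 - m) -
          aoi (caseII μmin μstar ν k k2) ((k : ℤ) + k1 + k2 + 1 - m)) =
      (μstar - μmin) * (∑ i ∈ range k2, (1 - μmin) ^ i) *
        (∑ i ∈ range (k1 + 1), (1 - μstar) ^ i - aoi ν k)) ∧
    (∑ m ∈ range (k1 + k2 + 1),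
        (aoi (caseI μmin μstar ν k k2) ((k : ℤ) + k1 + k2 + 1 - m) -
          aoi (caseII μmin μstar ν k k2) ((k : ℤ) + k1 + k2 + 1 - m)) ≤ 0) := by
  have hid := sum_aoi_caseI_sub_aoi_caseII (μmin := μmin) (μstar := μstar) (k2 := k2) hsum k1
  have hμmin_le : 0 ≤ 1 - μmin := sub_nonneg.2 (hμ_le.trans hμstar_le)
  refine ⟨hid, hid.trans_le (mul_nonpos_of_nonneg_of_nonpos ?_ ?_)⟩
  · exact mul_nonneg (sub_nonneg.2 hμ_le) (sum_nonneg fun i _ => pow_nonneg hμmin_le i)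
  · exact sub_nonpos.2 (geom_sum_one_sub_le_aoi hsum hμstar_le hν (k1 + 1))

/-- (Final chain in the proof of Lemma 4.) With `μ_I`, `μ_II` the Case I and
Case II schedules built from `k ≥ 0`, `k1 ≥ 0`, `k2 ≥ 1` and a common schedule
`ν`, and `T = k + k1 + k2 + 1`:
`∑_{m=0}^{k1+k2} (A_{μ_I}(T−m) − A_{μ_II}(T−m))
  = ((μ* − μ_min)(1 − (1−μ_min)^{k2})/μ_min) ((1 − (1−μ*)^{k1+1})/μ* − A_ν(k))`,
and this quantity is `≤ 0`, since `A_ν(k) ≥ 1/μ*`. -/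
theorem stmt_7 (μmin μstar : ℝ) (hμmin_pos : 0 < μmin) (hμ_le : μmin ≤ μstar)
    (hμstar_le : μstar ≤ 1) (k k1 k2 : ℕ) (hk2 : 1 ≤ k2)
    (ν : ℤ → ℝ) (hν : ∀ s : ℤ, μmin ≤ ν s ∧ ν s ≤ μstar) :
    (∑ m ∈ Finset.range (k1 + k2 + 1),
        (aoi (caseI μmin μstar ν k k2) ((k : ℤ) + k1 + k2 + 1 - m) -
          aoi (caseII μmin μstar ν k k2) ((k : ℤ) + k1 + k2 + 1 - m)) =
      (μstar - μmin) * (1 - (1 - μmin) ^ k2) / μmin *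
        ((1 - (1 - μstar) ^ (k1 + 1)) / μstar - aoi ν k)) ∧
    (∑ m ∈ Finset.range (k1 + k2 + 1),
        (aoi (caseI μmin μstar ν k k2) ((k : ℤ) + k1 + k2 + 1 - m) -
          aoi (caseII μmin μstar ν k k2) ((k : ℤ) + k1 + k2 + 1 - m)) ≤ 0) := by
  have hsum : AoiSummable ν k :=
    aoiSummable_of_forall_mem_Icc hμmin_pos fun s _ => ⟨(hν s).1, (hν s).2.trans hμstar_le⟩
  simpa only [geom_sum_one_sub hμmin_pos.ne', geom_sum_one_sub (hμmin_pos.trans_le hμ_le).ne',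
    mul_div_assoc]
    using stmt_7_general μmin μstar hμ_le hμstar_le k k1 k2 ν (fun s _ => (hν s).2) hsum
end

section
/- (Intermediate bound in the proof of Lemma 6 of the paper.) Fix reals μ_min and μ* with 0 < μ_min ≤ μ* ≤ 1, and integers T ≥ 1 and 0 ≤ n ≤ T. Let μ : ℤ → ℝ satisfy μ_min ≤ μ(s) ≤ 1 for s ≤ 0, μ(s) = μ_min for 1 ≤ s ≤ n, and μ(s) = μ* for n+1 ≤ s ≤ T. Then ∑_{t=1}^{T} A_μ(t) ≤ n/μ_min + (T−n)/μ* + (1−μ*)/(μ* μ_min). -/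
/-!
Conditioning on slot `t + 1` gives the recursion `A(t + 1) = 1 + (1 - μ(t + 1)) A(t)`. Where
`μ ≥ p` it yields `p A(t + 1) ≤ 1 + (1 - p) (A(t) - A(t + 1))`, which telescopes: a block of `N`
slots costs at most `N / p` plus `(1 - p) / p` times the age at its start. In the first phase
`A ≤ 1 / μ_min` slot by slot, and the same bound at its last slot controls the age with which the
second phase starts.
-/

open Finset

/-- The tail probability `P(a(t) > τ)` of the Age-of-Information: none of the updates attempted in
the `τ` slots `t, t - 1, …, t - τ + 1` succeeds. Its sum over `τ` is the expected age. -/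
noncomputable def ageTail (μ : ℤ → ℝ) (t : ℤ) (τ : ℕ) : ℝ :=
  ∏ i ∈ range τ, (1 - μ (t - i))

section

variable {μ : ℤ → ℝ} {t : ℤ}

lemma aoi_eq_tsum_ageTail : aoi μ t = ∑' τ, ageTail μ t τ := rfl

lemma ageTail_zero : ageTail μ t 0 = 1 := prod_range_zero _

lemma ageTail_add_one_succ (τ : ℕ) :
    ageTail μ (t + 1) (τ + 1) = (1 - μ (t + 1)) * ageTail μ t τ := by
  have shift (i : ℕ) : t + 1 - ((i + 1 : ℕ) : ℤ) = t - i := by push_cast; ring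
  simp only [ageTail, prod_range_succ', shift, Nat.cast_zero, sub_zero, mul_comm]

lemma ageTail_nonneg (hμ : ∀ s ≤ t, μ s ≤ 1) (τ : ℕ) : 0 ≤ ageTail μ t τ :=
  prod_nonneg fun i _ ↦ sub_nonneg.2 (hμ _ (by lia))

lemma ageTail_le_pow {p : ℝ} (hμ : ∀ s ≤ t, μ s ∈ Set.Icc p 1) (τ : ℕ) :
    ageTail μ t τ ≤ (1 - p) ^ τ :=
  calc
    ageTail μ t τ ≤ ∏ _i ∈ range τ, (1 - p) :=
      prod_le_prod (fun _ _ ↦ sub_nonneg.2 (hμ _ (by lia)).2)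
        (fun _ _ ↦ sub_le_sub_left (hμ _ (by lia)).1 1)
    _ = (1 - p) ^ τ := by rw [prod_const, card_range]

lemma summable_ageTail {p : ℝ} (hp : 0 < p) (hμ : ∀ s ≤ t, μ s ∈ Set.Icc p 1) :
    Summable (ageTail μ t) := by
  have hp1 : p ≤ 1 := (hμ t le_rfl).1.trans (hμ t le_rfl).2
  exact .of_nonneg_of_le (ageTail_nonneg fun s hs ↦ (hμ s hs).2) (ageTail_le_pow hμ)
    (summable_geometric_of_lt_one (sub_nonneg.2 hp1) (sub_lt_self 1 hp))

lemma summable_ageTail_add_one (h : Summable (ageTail μ t)) : Summable (ageTail μ (t + 1)) :=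
  (summable_nat_add_iff 1).1 <| by simpa only [ageTail_add_one_succ] using h.mul_left _

lemma aoi_add_one (h : Summable (ageTail μ t)) :
    aoi μ (t + 1) = 1 + (1 - μ (t + 1)) * aoi μ t := by
  simp only [aoi_eq_tsum_ageTail, (summable_ageTail_add_one h).tsum_eq_zero_add, ageTail_zero,
    ageTail_add_one_succ, tsum_mul_left]

lemma aoi_nonneg (hμ : ∀ s ≤ t, μ s ≤ 1) : 0 ≤ aoi μ t :=
  tsum_nonneg (ageTail_nonneg hμ)

lemma aoi_le_inv {p : ℝ} (hp : 0 < p) (hμ : ∀ s ≤ t, μ s ∈ Set.Icc p 1) : aoi μ t ≤ p⁻¹ := by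
  have hp1 : p ≤ 1 := (hμ t le_rfl).1.trans (hμ t le_rfl).2
  have hgeom : HasSum (fun τ : ℕ ↦ (1 - p) ^ τ) p⁻¹ := by
    simpa only [sub_sub_cancel] using
      hasSum_geometric_of_lt_one (sub_nonneg.2 hp1) (sub_lt_self 1 hp)
  exact hasSum_le (ageTail_le_pow hμ) (summable_ageTail hp hμ).hasSum hgeom

lemma mul_aoi_add_one_le {p : ℝ} (h : Summable (ageTail μ t)) (hμ : ∀ s ≤ t, μ s ≤ 1)
    (hpμ : p ≤ μ (t + 1)) :
    p * aoi μ (t + 1) ≤ 1 + (1 - p) * (aoi μ t - aoi μ (t + 1)) := by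
  have hstep : (1 - μ (t + 1)) * aoi μ t ≤ (1 - p) * aoi μ t :=
    mul_le_mul_of_nonneg_right (sub_le_sub_left hpμ 1) (aoi_nonneg hμ)
  linarith [aoi_add_one h]

end

section

variable {μ : ℤ → ℝ} {a b : ℤ} {p : ℝ}

lemma summable_ageTail_of_le (h : Summable (ageTail μ a)) (hab : a ≤ b) :
    Summable (ageTail μ b) := by
  induction b, hab using Int.leInduction with
  | base => exact h
  | succ b _ ih => exact summable_ageTail_add_one ih

lemma mul_sum_Ioc_aoi_le (h : Summable (ageTail μ a)) (hab : a ≤ b) (hμ : ∀ s ≤ b, μ s ≤ 1)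
    (hpμ : ∀ s, a < s → s ≤ b → p ≤ μ s) :
    p * ∑ t ∈ Ioc a b, aoi μ t ≤ (b - a) + (1 - p) * (aoi μ a - aoi μ b) := by
  induction b, hab using Int.leInduction with
  | base => simp
  | succ b hab ih =>
    have hprev := ih (fun s hs ↦ hμ s (by lia)) (fun s has hs ↦ hpμ s has (by lia))
    have hlast := mul_aoi_add_one_le (summable_ageTail_of_le h hab) (fun s hs ↦ hμ s (by lia))
      (hpμ (b + 1) (by lia) le_rfl)
    rw [← insert_Ioc_right_eq_Ioc_add_one hab, sum_insert (by simp)]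
    push_cast
    linarith

lemma sum_Ioc_aoi_le_div_add (hp : 0 < p) (hp1 : p ≤ 1) (h : Summable (ageTail μ a)) (hab : a ≤ b)
    (hμ : ∀ s ≤ b, μ s ≤ 1) (hpμ : ∀ s, a < s → s ≤ b → p ≤ μ s) :
    ∑ t ∈ Ioc a b, aoi μ t ≤ (b - a) / p + (1 - p) / p * aoi μ a := by
  have hend : 0 ≤ (1 - p) * aoi μ b := mul_nonneg (sub_nonneg.2 hp1) (aoi_nonneg hμ)
  rw [div_mul_eq_mul_div, ← add_div, le_div_iff₀' hp]
  linarith [mul_sum_Ioc_aoi_le h hab hμ hpμ]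

lemma sum_Ioc_aoi_le_div (hp : 0 < p) (hab : a ≤ b) (hμ : ∀ s ≤ b, μ s ∈ Set.Icc p 1) :
    ∑ t ∈ Ioc a b, aoi μ t ≤ (b - a) / p := by
  have hcard : (#(Ioc a b) : ℝ) = b - a := mod_cast Int.card_Ioc_of_le a b hab
  have haoi (t : ℤ) (ht : t ∈ Ioc a b) : aoi μ t ≤ p⁻¹ :=
    aoi_le_inv hp fun s hs ↦ hμ s (hs.trans (mem_Ioc.1 ht).2)
  simpa only [nsmul_eq_mul, hcard, ← div_eq_mul_inv] using sum_le_card_nsmul _ _ _ haoi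

end

theorem stmt_10_general {μ : ℤ → ℝ} {a b c : ℤ} {p q : ℝ} (hp : 0 < p) (hq : 0 < q) (hq1 : q ≤ 1)
    (hab : a ≤ b) (hbc : b ≤ c) (hpμ : ∀ s ≤ b, μ s ∈ Set.Icc p 1)
    (hqμ : ∀ s, b < s → s ≤ c → μ s ∈ Set.Icc q 1) :
    ∑ t ∈ Ioc a c, aoi μ t ≤ (b - a) / p + (c - b) / q + (1 - q) / (q * p) := by
  have hle_one (s : ℤ) (hsc : s ≤ c) : μ s ≤ 1 :=
    (le_or_gt s b).elim (fun hsb ↦ (hpμ s hsb).2) fun hbs ↦ (hqμ s hbs hsc).2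
  have hfirst : ∑ t ∈ Ioc a b, aoi μ t ≤ (b - a) / p := sum_Ioc_aoi_le_div hp hab hpμ
  have hsecond : ∑ t ∈ Ioc b c, aoi μ t ≤ (c - b) / q + (1 - q) / q * aoi μ b :=
    sum_Ioc_aoi_le_div_add hq hq1 (summable_ageTail hp hpμ) hbc hle_one
      fun s hbs hsc ↦ (hqμ s hbs hsc).1
  have hstart : (1 - q) / q * aoi μ b ≤ (1 - q) / (q * p) := by
    rw [← div_div, div_eq_mul_inv _ p]
    exact mul_le_mul_of_nonneg_left (aoi_le_inv hp hpμ) (div_nonneg (sub_nonneg.2 hq1) hq.le)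
  rw [← Ioc_union_Ioc_eq_Ioc hab hbc, sum_union (Ioc_disjoint_Ioc_of_le le_rfl)]
  linarith

/-- (Intermediate bound in the proof of Lemma 6.) Fix `0 < μ_min ≤ μ* ≤ 1`
and integers `T ≥ 1`, `0 ≤ n ≤ T`. Let `μ : ℤ → ℝ` satisfy
`μ_min ≤ μ(s) ≤ 1` for `s ≤ 0`, `μ(s) = μ_min` for `1 ≤ s ≤ n`, and
`μ(s) = μ*` for `n+1 ≤ s ≤ T`. Then
`∑_{t=1}^{T} A_μ(t) ≤ n/μ_min + (T−n)/μ* + (1−μ*)/(μ* μ_min)`. -/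
theorem stmt_10 (μmin μstar : ℝ) (hμmin_pos : 0 < μmin) (hμ_le : μmin ≤ μstar)
    (hμstar_le : μstar ≤ 1) (T n : ℕ) (hT : 1 ≤ T) (hn : n ≤ T)
    (μ : ℤ → ℝ)
    (h0 : ∀ s : ℤ, s ≤ 0 → μmin ≤ μ s ∧ μ s ≤ 1)
    (hworst : ∀ s : ℤ, 1 ≤ s → s ≤ (n : ℤ) → μ s = μmin)
    (hopt : ∀ s : ℤ, (n : ℤ) + 1 ≤ s → s ≤ (T : ℤ) → μ s = μstar) :
    ∑ t ∈ Finset.Icc (1 : ℤ) (T : ℤ), aoi μ t ≤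
      (n : ℝ) / μmin + ((T : ℝ) - n) / μstar + (1 - μstar) / (μstar * μmin) := by
  simpa [← Icc_add_one_left_eq_Ioc] using stmt_10_general (a := 0) (b := n) (c := T) hμmin_pos
    (hμmin_pos.trans_le hμ_le) hμstar_le (by lia) (mod_cast hn)
    (fun s hs ↦ (le_or_gt s 0).elim (h0 s) fun hpos ↦ by
      simp [hworst s hpos hs, hμ_le.trans hμstar_le])
    (fun s hns hsT ↦ by simp [hopt s hns hsT, hμstar_le])
end
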